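/- arXiv:1112.5415 — 2 statements merged into one kernel-verified Lean document; each statement's English description precedes it below -/
import Mathlib

section
/- For every x ∈ E(Φ) and every w ∈ W, one has |w(x)|₁ > 0; that is, E(Φ) is contained in D⁺ = V₁ ∩ ⋂_{w∈W} w(V₀⁺), where V₀⁺ = {v∈V : |v|₁ > 0}. -/
open Filter Topology

noncomputable section

variable {ι V : Type*} [Fintype ι] [NormedAddCommGroup V] [NormedSpace ℝ V]

/-- The set of simple `B`-reflections: the linear automorphisms of `V` given by the
`B`-reflection formula `u ↦ u - 2 (B α u / B α α) • α` associated to a simple root `α ∈ Δ`. -/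
def simpleReflections (B : LinearMap.BilinForm ℝ V) (Δ : Module.Basis ι ℝ V) :
    Set (V ≃ₗ[ℝ] V) :=
  { e | ∃ i : ι, ∀ u : V, e u = u - (2 * B (Δ i) u / B (Δ i) (Δ i)) • Δ i }

/-- The geometric Coxeter group `W`: the subgroup of linear automorphisms of `V`
generated by the simple `B`-reflections. -/
def cox (B : LinearMap.BilinForm ℝ V) (Δ : Module.Basis ι ℝ V) : Subgroup (V ≃ₗ[ℝ] V) :=
  Subgroup.closure (simpleReflections B Δ)

/-- The root system `Φ = W ⬝ Δ`. -/
def Phi (B : LinearMap.BilinForm ℝ V) (Δ : Module.Basis ι ℝ V) : Set V :=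
  { ρ | ∃ w ∈ cox B Δ, ∃ i : ι, w (Δ i) = ρ }

/-- The positive roots `Φ⁺ = Φ ∩ cone(Δ)`. -/
def posPhi (B : LinearMap.BilinForm ℝ V) (Δ : Module.Basis ι ℝ V) : Set V :=
  { ρ ∈ Phi B Δ | ∀ i : ι, 0 ≤ Δ.repr ρ i }

/-- `|v|₁`: the sum of the coordinates of `v` in the basis `Δ`. -/
def l1 (Δ : Module.Basis ι ℝ V) (v : V) : ℝ := ∑ i : ι, Δ.repr v i

/-- The normalization map `v ↦ v̂ = v / |v|₁`. -/
def nrm (Δ : Module.Basis ι ℝ V) (v : V) : V := (l1 Δ v)⁻¹ • v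

/-- The set `Φ̂` of normalized roots. -/
def nPhi (B : LinearMap.BilinForm ℝ V) (Δ : Module.Basis ι ℝ V) : Set V :=
  nrm Δ '' posPhi B Δ

/-- `E(Φ)`: the set of accumulation points of the set of normalized roots. -/
def Eset (B : LinearMap.BilinForm ℝ V) (Δ : Module.Basis ι ℝ V) : Set V :=
  { x | AccPt x (𝓟 (nPhi B Δ)) }

/-- The isotropic cone `Q` of `B`. -/
def isoQ (B : LinearMap.BilinForm ℝ V) : Set V := { v | B v v = 0 }

/-!
A root is sent by any `w ∈ W` into `cone(Δ)` or into `-cone(Δ)`, and a simple reflection `s_α` makes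
only one positive root negative, namely `α`; hence each `w` keeps all but finitely many positive
roots in the closed cone. Finite sets have no accumulation points, so `w` maps `E(Φ)` into
`cone(Δ)`, where `|·|₁` is positive away from `0`.

The sign dichotomy is proved by induction on the length of a word for `w`. Given a word and two
simple roots `α ≠ β`, the exchange property lets one write its product as `m * d`, with `d` in the
group generated by `s_α` and `s_β`, and `m` sending `α` and `β` into the cone. The coordinates of
`d α` are then consecutive values of the Chebyshev polynomials `U_k` at `-B(α,β)`, and the
restriction on `B(α,β)` is what makes consecutive values agree in sign.
-/

section Chebyshev

open Polynomial.Chebyshev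

/-- The property of `c` that consecutive Chebyshev values `U_k(c)` have the same sign, in the weak
sense that allows zeros. For `c = -B(α,β)` these values are the coordinates of the roots of the
dihedral group generated by the reflections in `α` and `β`. The index `k` ranges over `ℤ`, with
`U_{-1} = 0`. -/
def IsChebyshevCoherent {R : Type*} [CommRing R] [LE R] (c : R) : Prop :=
  ∀ k : ℤ, 0 ≤ (U R k).eval c * (U R (k - 1)).eval c

lemma IsChebyshevCoherent.eval_mul_eval_nonneg {R : Type*} [CommRing R] [LE R] {c : R}
    (hc : IsChebyshevCoherent c) {k l : ℤ} (hkl : k = l + 1 ∨ k = l - 1) :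
    0 ≤ (U R k).eval c * (U R l).eval c := by
  rcases hkl with rfl | rfl
  · simpa using hc (l + 1)
  · simpa [mul_comm] using hc l

section OrderedRing

variable {R : Type*} [CommRing R] [LinearOrder R] [IsStrictOrderedRing R] {c : R}

lemma eval_U_sub_one_nonneg_and_le (hc : 1 ≤ c) (n : ℕ) :
    0 ≤ (U R (n - 1)).eval c ∧ (U R (n - 1)).eval c ≤ (U R n).eval c := by
  induction n with
  | zero => simp
  | succ n ih =>
    obtain ⟨h_nonneg, h_le⟩ := ih
    have h_rec : (U R (n + 1)).eval c = 2 * c * (U R n).eval c - (U R (n - 1)).eval c := by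
      simp [U_add_one]
    push_cast
    rw [add_sub_cancel_right, h_rec]
    exact ⟨h_nonneg.trans h_le, by nlinarith [mul_nonneg (sub_nonneg.2 hc) (h_nonneg.trans h_le)]⟩

lemma isChebyshevCoherent_of_one_le (hc : 1 ≤ c) : IsChebyshevCoherent c := by
  have h_nat (n : ℕ) : 0 ≤ (U R n).eval c * (U R (n - 1)).eval c :=
    have h := eval_U_sub_one_nonneg_and_le hc n
    mul_nonneg (h.1.trans h.2) h.1
  intro k
  obtain ⟨n, rfl | rfl⟩ := k.eq_nat_or_neg
  · exact h_nat n
  · rcases n with _ | n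
    · simp
    · have h_reflect : U R (-(n + 1 : ℕ)) = -U R (n - 1) ∧ U R (-(n + 1 : ℕ) - 1) = -U R n := by
        rw [← U_neg_sub_one, ← U_neg_sub_two]
        constructor <;> congr 1 <;> push_cast <;> ring
      rw [h_reflect.1, h_reflect.2, Polynomial.eval_neg, Polynomial.eval_neg, neg_mul_neg, mul_comm]
      exact h_nat n

end OrderedRing

lemma sin_add_one_mul_pi_div_mul_sin_nonneg (m : ℕ) (k : ℤ) :
    0 ≤ Real.sin ((k + 1) * (Real.pi / m)) * Real.sin (k * (Real.pi / m)) := by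
  rcases m.eq_zero_or_pos with rfl | hm
  · simp
  have : (0 : ℝ) < m := by exact_mod_cast hm
  obtain ⟨q, r, hr_nonneg, hr_lt, rfl⟩ : ∃ q r : ℤ, 0 ≤ r ∧ r < m ∧ k = r + m * q :=
    ⟨k / m, k % m, k.emod_nonneg (by lia), k.emod_lt_of_pos (by lia),
      (k.emod_add_mul_ediv m).symm⟩
  have h_shift (x : ℝ) : Real.sin ((x + m * q) * (Real.pi / m)) =
      (-1) ^ q * Real.sin (x * (Real.pi / m)) := by
    rw [← Real.sin_add_int_mul_pi]
    congr 1
    field_simp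
  have h_sin_nonneg {x : ℝ} (hx : 0 ≤ x) (hxm : x ≤ m) : 0 ≤ Real.sin (x * (Real.pi / m)) :=
    Real.sin_nonneg_of_nonneg_of_le_pi (by positivity) <| calc
      x * (Real.pi / m) ≤ m * (Real.pi / m) := by gcongr
      _ = Real.pi := by field_simp
  have hr_nonneg' : (0 : ℝ) ≤ r := by exact_mod_cast hr_nonneg
  have hr_lt' : (r : ℝ) + 1 ≤ m := by exact_mod_cast hr_lt
  push_cast
  rw [add_right_comm, h_shift, h_shift, mul_mul_mul_comm]
  exact mul_nonneg (mul_self_nonneg _)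
    (mul_nonneg (h_sin_nonneg (by linarith) hr_lt') (h_sin_nonneg hr_nonneg' (by linarith)))

lemma isChebyshevCoherent_cos_pi_div {m : ℕ} (hm : 2 ≤ m) :
    IsChebyshevCoherent (Real.cos (Real.pi / m)) := by
  intro k
  have hm_real : (2 : ℝ) ≤ m := by exact_mod_cast hm
  have h_sin_pos : 0 < Real.sin (Real.pi / m) :=
    Real.sin_pos_of_pos_of_lt_pi (by positivity) (div_lt_self Real.pi_pos (by linarith))
  have h := sin_add_one_mul_pi_div_mul_sin_nonneg m k
  have h_pred := U_real_cos (Real.pi / m) (k - 1)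
  push_cast at h_pred
  rw [sub_add_cancel] at h_pred
  rw [← U_real_cos, ← h_pred, mul_mul_mul_comm] at h
  exact nonneg_of_mul_nonneg_left h (mul_pos h_sin_pos h_sin_pos)

lemma reflection_eval_U_smul_add {R M : Type*} [CommRing R] [AddCommGroup M] [Module R M]
    {x y : M} {f : Module.Dual R M} (hx : f x = 2) {c : R} (hy : f y = -(2 * c))
    {k l : ℤ} (hkl : k = l + 1 ∨ k = l - 1) :
    Module.reflection hx ((U R k).eval c • x + (U R l).eval c • y) =
      (U R (2 * l - k)).eval c • x + (U R l).eval c • y := by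
  have h_rec : (U R (2 * l - k)).eval c = 2 * c * (U R l).eval c - (U R k).eval c := by
    rcases hkl with rfl | rfl
    · rw [show 2 * l - (l + 1) = l - 1 by ring, U_sub_one]
      simp
    · rw [show 2 * l - (l - 1) = l + 1 by ring, U_add_one]
      simp
  simp only [h_rec, Module.reflection_apply, map_add, map_smul, hx, hy]
  module

end Chebyshev

section SimpleReflections

variable {R M I : Type*} [CommRing R] [AddCommGroup M] [Module R M]
  {B : LinearMap.BilinForm R M} {Δ : Module.Basis I R M}

/-- The reflection `u ↦ u - 2 B(α, u) α` in a simple root `α = Δ i`, as an instance of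
`Module.reflection`. -/
def simpleReflection (hdiag : ∀ i, B (Δ i) (Δ i) = 1) (i : I) : M ≃ₗ[R] M :=
  Module.reflection (x := Δ i) (f := (2 : R) • B (Δ i)) (by simp [hdiag])

/-- The product `s_{i₁} ⋯ s_{iₙ}` of the simple reflections along the word `i₁ ⋯ iₙ`. -/
def wordProd (hdiag : ∀ i, B (Δ i) (Δ i) = 1) (L : List I) : M ≃ₗ[R] M :=
  (L.map (simpleReflection hdiag)).prod

/-- The standard parabolic subgroup `W_J`, generated by the simple reflections with index in `J`. -/
def parabolicSubgroup (hdiag : ∀ i, B (Δ i) (Δ i) = 1) (J : Set I) : Subgroup (M ≃ₗ[R] M) :=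
  Subgroup.closure (simpleReflection hdiag '' J)

variable (hdiag : ∀ i, B (Δ i) (Δ i) = 1)

lemma simpleReflection_apply (i : I) (u : M) :
    simpleReflection hdiag i u = u - (2 * B (Δ i) u) • Δ i := by
  simp [simpleReflection, Module.reflection_apply]

lemma simpleReflection_self (i : I) : simpleReflection hdiag i (Δ i) = -Δ i :=
  Module.reflection_apply_self _

lemma simpleReflection_mul_self (i : I) : simpleReflection hdiag i * simpleReflection hdiag i = 1 :=
  LinearEquiv.ext (Module.involutive_reflection _)

lemma repr_simpleReflection_of_ne {i j : I} (hij : i ≠ j) (v : M) :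
    Δ.repr (simpleReflection hdiag i v) j = Δ.repr v j := by
  simp [simpleReflection_apply, hij]

lemma apply_simpleReflection_simpleReflection (hB : B.IsSymm) (i : I) (u v : M) :
    B (simpleReflection hdiag i u) (simpleReflection hdiag i v) = B u v := by
  simp only [simpleReflection_apply, map_sub, map_smul, LinearMap.sub_apply, LinearMap.smul_apply,
    hdiag, smul_eq_mul, hB.eq u (Δ i)]
  ring

lemma wordProd_nil : wordProd hdiag [] = 1 := rfl

lemma wordProd_cons (i : I) (L : List I) :
    wordProd hdiag (i :: L) = simpleReflection hdiag i * wordProd hdiag L := by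
  simp [wordProd]

lemma wordProd_append (L L' : List I) :
    wordProd hdiag (L ++ L') = wordProd hdiag L * wordProd hdiag L' := by
  simp [wordProd]

lemma wordProd_append_singleton (L : List I) (i : I) :
    wordProd hdiag (L ++ [i]) = wordProd hdiag L * simpleReflection hdiag i := by
  simp [wordProd]

lemma apply_wordProd_wordProd (hB : B.IsSymm) (L : List I) (u v : M) :
    B (wordProd hdiag L u) (wordProd hdiag L v) = B u v := by
  induction L with
  | nil => rfl
  | cons i L ih =>
    rw [wordProd_cons, LinearEquiv.mul_apply, LinearEquiv.mul_apply,
      apply_simpleReflection_simpleReflection hdiag hB, ih]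

lemma exists_wordProd_eq_of_mem_closure {w : M ≃ₗ[R] M}
    (hw : w ∈ Subgroup.closure (Set.range (simpleReflection hdiag))) :
    ∃ L : List I, wordProd hdiag L = w := by
  induction hw using Subgroup.closure_induction_left with
  | one => exact ⟨[], wordProd_nil hdiag⟩
  | mul_left _ hs _ _ ih | inv_mul_cancel _ hs _ _ ih =>
    obtain ⟨i, rfl⟩ := hs
    obtain ⟨L, rfl⟩ := ih
    exact ⟨i :: L, wordProd_cons hdiag i L⟩

lemma wordProd_mul_simpleReflection_of_wordProd_eq (hB : B.IsSymm) {L : List I} {i s : I}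
    (h : wordProd hdiag L (Δ s) = Δ i) :
    wordProd hdiag L * simpleReflection hdiag s = simpleReflection hdiag i * wordProd hdiag L := by
  ext u
  simp only [LinearEquiv.mul_apply, simpleReflection_apply, map_sub, map_smul]
  rw [← h, apply_wordProd_wordProd hdiag hB]

open Polynomial.Chebyshev in
lemma exists_apply_eq_of_mem_parabolicSubgroup_pair (hB : B.IsSymm) (s t : I) {d : M ≃ₗ[R] M}
    (hd : d ∈ parabolicSubgroup hdiag {s, t}) :
    ∃ k l : ℤ, (k = l + 1 ∨ k = l - 1) ∧ d (Δ s) =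
      (U R k).eval (-B (Δ s) (Δ t)) • Δ s + (U R l).eval (-B (Δ s) (Δ t)) • Δ t := by
  induction hd using Subgroup.closure_induction_left with
  | one => exact ⟨0, -1, by simp⟩
  | mul_left _ hr d _ ih | inv_mul_cancel _ hr d _ ih =>
    obtain ⟨k, l, hkl, hd⟩ := ih
    obtain ⟨i, rfl | rfl, rfl⟩ := hr
    · refine ⟨2 * l - k, l, by lia, ?_⟩
      change simpleReflection hdiag i (d (Δ i)) = _
      rw [hd]
      exact reflection_eval_U_smul_add _ (by simp) hkl
    · refine ⟨k, 2 * k - l, by lia, ?_⟩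
      change simpleReflection hdiag i (d (Δ s)) = _
      rw [hd, add_comm, add_comm (_ • Δ s)]
      exact reflection_eval_U_smul_add _ (by simp [hB.eq (Δ i) (Δ s)]) (by lia)

end SimpleReflections

section SimpleCone

variable {R M I : Type*} [CommRing R] [LinearOrder R] [IsStrictOrderedRing R]
  [AddCommGroup M] [Module R M] {B : LinearMap.BilinForm R M} {Δ : Module.Basis I R M}

/-- `cone(Δ)`, encoded as the set of vectors whose coordinates in `Δ` are all nonnegative. -/
def simpleCone (Δ : Module.Basis I R M) : PointedCone R M where
  carrier := {v | ∀ i, 0 ≤ Δ.repr v i}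
  zero_mem' i := by simp
  add_mem' hu hv i := by simpa using add_nonneg (hu i) (hv i)
  smul_mem' c v hv i := by
    change 0 ≤ Δ.repr ((c : R) • v) i
    rw [map_smul]
    exact mul_nonneg c.2 (hv i)

/-- A vector is sign coherent if its coordinates in `Δ` are all nonnegative or all nonpositive. -/
def SignCoherent (Δ : Module.Basis I R M) (v : M) : Prop :=
  v ∈ simpleCone Δ ∨ -v ∈ simpleCone Δ

lemma basis_mem_simpleCone (i : I) : Δ i ∈ simpleCone Δ := by
  classical
  intro j
  rw [Δ.repr_self, Finsupp.single_apply]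
  split_ifs <;> simp

lemma neg_basis_notMem_simpleCone (i : I) : -Δ i ∉ simpleCone Δ := fun h =>
  absurd (h i) (by simp)

lemma signCoherent_smul_add_smul {u v : M} (hu : u ∈ simpleCone Δ) (hv : v ∈ simpleCone Δ)
    {a b : R} (hab : 0 ≤ a * b) : SignCoherent Δ (a • u + b • v) := by
  rcases mul_nonneg_iff.1 hab with ⟨ha, hb⟩ | ⟨ha, hb⟩
  · exact Or.inl (add_mem (PointedCone.smul_mem _ ha hu) (PointedCone.smul_mem _ hb hv))
  · right
    rw [neg_add, ← neg_smul, ← neg_smul]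
    exact add_mem (PointedCone.smul_mem _ (neg_nonneg.2 ha) hu)
      (PointedCone.smul_mem _ (neg_nonneg.2 hb) hv)

variable (hdiag : ∀ i, B (Δ i) (Δ i) = 1)

lemma eq_basis_of_neg_simpleReflection_mem_simpleCone {i : I} {v : M} (hv : v ∈ simpleCone Δ)
    (hBv : B v v = 1) (h_neg : -simpleReflection hdiag i v ∈ simpleCone Δ) : v = Δ i := by
  have h_repr (j : I) (hj : j ≠ i) : Δ.repr v j = 0 := by
    have h := h_neg j
    rw [map_neg, Finsupp.neg_apply, repr_simpleReflection_of_ne hdiag hj.symm] at h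
    linarith [hv j]
  obtain ⟨c, hc, rfl⟩ : ∃ c : R, 0 ≤ c ∧ v = c • Δ i :=
    ⟨Δ.repr v i, hv i, Δ.ext_elem fun j => by
      by_cases hj : j = i
      · simp [hj]
      · simp [h_repr j hj, Ne.symm hj]⟩
  have h_sq : c ^ 2 = 1 := by simpa [hdiag, sq] using hBv
  rw [(pow_eq_one_iff_of_nonneg hc two_ne_zero).1 h_sq, one_smul]

lemma exists_wordProd_eq_mul_simpleReflection (hB : B.IsSymm) {s : I} (L : List I)
    (h_coh : ∀ L' : List I, L'.length < L.length → SignCoherent Δ (wordProd hdiag L' (Δ s)))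
    (h_neg : -wordProd hdiag L (Δ s) ∈ simpleCone Δ) :
    ∃ L' : List I, L'.length < L.length ∧
      wordProd hdiag L' = wordProd hdiag L * simpleReflection hdiag s := by
  induction L with
  | nil => exact absurd h_neg (neg_basis_notMem_simpleCone s)
  | cons i L ih =>
    rcases h_coh L (by simp) with h_pos | h_neg'
    · have h_eq : wordProd hdiag L (Δ s) = Δ i := by
        rw [wordProd_cons] at h_neg
        exact eq_basis_of_neg_simpleReflection_mem_simpleCone hdiag h_pos
          (by rw [apply_wordProd_wordProd hdiag hB, hdiag]) h_neg
      refine ⟨L, by simp, ?_⟩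
      rw [wordProd_cons, mul_assoc, wordProd_mul_simpleReflection_of_wordProd_eq hdiag hB h_eq,
        ← mul_assoc, simpleReflection_mul_self, one_mul]
    · obtain ⟨L', h_len, h_prod⟩ :=
        ih (fun L' hL' => h_coh L' (hL'.trans (by simp))) h_neg'
      exact ⟨i :: L', by simpa using h_len, by rw [wordProd_cons, wordProd_cons, h_prod, mul_assoc]⟩

lemma exists_wordProd_eq_mul_mem_parabolicSubgroup (hB : B.IsSymm) (J : Set I) (L : List I)
    (h_coh : ∀ L' : List I, L'.length ≤ L.length →
      ∀ s ∈ J, SignCoherent Δ (wordProd hdiag L' (Δ s))) :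
    ∃ m, ∃ d ∈ parabolicSubgroup hdiag J, wordProd hdiag L = m * d ∧
      ∀ s ∈ J, m (Δ s) ∈ simpleCone Δ := by
  by_cases h_pos : ∀ s ∈ J, wordProd hdiag L (Δ s) ∈ simpleCone Δ
  · exact ⟨wordProd hdiag L, 1, one_mem _, (mul_one _).symm, h_pos⟩
  push Not at h_pos
  obtain ⟨s, hs, h_notMem⟩ := h_pos
  obtain ⟨L', h_len, h_prod⟩ := exists_wordProd_eq_mul_simpleReflection hdiag hB L
    (fun L' hL' => h_coh L' hL'.le s hs) ((h_coh L le_rfl s hs).resolve_left h_notMem)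
  obtain ⟨m, d, hd, hmd, hm⟩ := exists_wordProd_eq_mul_mem_parabolicSubgroup hB J L'
    fun L'' hL'' => h_coh L'' (hL''.trans h_len.le)
  refine ⟨m, d * simpleReflection hdiag s, mul_mem hd (Subgroup.subset_closure ⟨s, hs, rfl⟩),
    ?_, hm⟩
  rw [← mul_assoc, ← hmd, h_prod, mul_assoc, simpleReflection_mul_self, mul_one]
termination_by L.length

theorem signCoherent_wordProd_basis (hB : B.IsSymm)
    (hcoh : ∀ s t, s ≠ t → IsChebyshevCoherent (-B (Δ s) (Δ t))) (L : List I) (s : I) :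
    SignCoherent Δ (wordProd hdiag L (Δ s)) := by
  rcases L.eq_nil_or_concat' with rfl | ⟨L, t, rfl⟩
  · exact Or.inl (basis_mem_simpleCone s)
  rcases eq_or_ne s t with rfl | hst
  · rw [wordProd_append_singleton, LinearEquiv.mul_apply, simpleReflection_self, map_neg,
      SignCoherent, neg_neg]
    exact (signCoherent_wordProd_basis hB hcoh L s).symm
  · obtain ⟨m, d, hd, hmd, hm⟩ := exists_wordProd_eq_mul_mem_parabolicSubgroup hdiag hB {s, t} L
      fun L' _ i _ => signCoherent_wordProd_basis hB hcoh L' i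
    have hdt : d * simpleReflection hdiag t ∈ parabolicSubgroup hdiag {s, t} :=
      mul_mem hd (Subgroup.subset_closure ⟨t, by simp, rfl⟩)
    obtain ⟨k, l, hkl, h_root⟩ := exists_apply_eq_of_mem_parabolicSubgroup_pair hdiag hB s t hdt
    rw [wordProd_append_singleton, hmd, mul_assoc, LinearEquiv.mul_apply, h_root, map_add, map_smul,
      map_smul]
    exact signCoherent_smul_add_smul (hm s (by simp)) (hm t (by simp))
      ((hcoh s t hst).eval_mul_eval_nonneg hkl)
termination_by L.length
decreasing_by all_goals grind

end SimpleCone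

section Topology

lemma mem_of_accPt_of_finite_diff {X : Type*} [TopologicalSpace X] [T1Space X] {S F : Set X} {x : X}
    (hx : AccPt x (𝓟 S)) (hF : IsClosed F) (h_fin : (S \ F).Finite) : x ∈ F := by
  rw [← Set.inter_union_sdiff S F, ← sup_principal, accPt_sup] at hx
  rcases hx with h_inter | h_diff
  · exact isClosed_iff_accPt.1 hF x (h_inter.mono (principal_mono.2 Set.inter_subset_right))
  · exact absurd h_fin (Set.Infinite.of_accPt h_diff)

lemma isClosed_simpleCone {E I : Type*} [Finite I] [AddCommGroup E] [Module ℝ E]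
    [TopologicalSpace E] [IsTopologicalAddGroup E] [ContinuousSMul ℝ E] [T2Space E]
    (Δ : Module.Basis I ℝ E) : IsClosed (simpleCone Δ : Set E) := by
  have := Module.Finite.of_basis Δ
  change IsClosed {v | ∀ i, 0 ≤ Δ.repr v i}
  rw [Set.ofPred_forall]
  exact isClosed_iInter fun i =>
    isClosed_le continuous_const (Δ.coord i).continuous_of_finiteDimensional

end Topology

section Roots

variable {E I : Type*} [NormedAddCommGroup E] [NormedSpace ℝ E] {B : LinearMap.BilinForm ℝ E}
  {Δ : Module.Basis I ℝ E}

lemma ne_zero_of_mem_Phi {ρ : E} (hρ : ρ ∈ Phi B Δ) : ρ ≠ 0 := by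
  obtain ⟨w, -, i, rfl⟩ := hρ
  exact w.map_ne_zero_iff.2 (Δ.ne_zero i)

variable (hdiag : ∀ i, B (Δ i) (Δ i) = 1)

lemma simpleReflections_eq_range : simpleReflections B Δ = Set.range (simpleReflection hdiag) := by
  ext e
  simp only [simpleReflections, hdiag, div_one, ← simpleReflection_apply hdiag,
    ← LinearEquiv.ext_iff, Set.mem_ofPred_eq, Set.mem_range, eq_comm]

lemma exists_wordProd_eq_of_mem_cox {w : E ≃ₗ[ℝ] E} (hw : w ∈ cox B Δ) :
    ∃ L : List I, wordProd hdiag L = w := by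
  rw [cox, simpleReflections_eq_range hdiag] at hw
  exact exists_wordProd_eq_of_mem_closure hdiag hw

lemma exists_wordProd_basis_eq_of_mem_Phi {ρ : E} (hρ : ρ ∈ Phi B Δ) :
    ∃ L s, wordProd hdiag L (Δ s) = ρ := by
  obtain ⟨w, hw, s, rfl⟩ := hρ
  obtain ⟨L, rfl⟩ := exists_wordProd_eq_of_mem_cox hdiag hw
  exact ⟨L, s, rfl⟩

lemma signCoherent_wordProd_of_mem_Phi (hB : B.IsSymm)
    (hcoh : ∀ s t, s ≠ t → IsChebyshevCoherent (-B (Δ s) (Δ t))) (L : List I) {ρ : E}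
    (hρ : ρ ∈ Phi B Δ) : SignCoherent Δ (wordProd hdiag L ρ) := by
  obtain ⟨L', s, rfl⟩ := exists_wordProd_basis_eq_of_mem_Phi hdiag hρ
  rw [← LinearEquiv.mul_apply, ← wordProd_append]
  exact signCoherent_wordProd_basis hdiag hB hcoh (L ++ L') s

include hdiag in
lemma apply_self_eq_one_of_mem_Phi (hB : B.IsSymm) {ρ : E} (hρ : ρ ∈ Phi B Δ) : B ρ ρ = 1 := by
  obtain ⟨L, s, rfl⟩ := exists_wordProd_basis_eq_of_mem_Phi hdiag hρ
  rw [apply_wordProd_wordProd hdiag hB, hdiag]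

lemma finite_setOf_wordProd_notMem_simpleCone (hB : B.IsSymm)
    (hcoh : ∀ s t, s ≠ t → IsChebyshevCoherent (-B (Δ s) (Δ t))) (L : List I) :
    {ρ ∈ posPhi B Δ | wordProd hdiag L ρ ∉ simpleCone Δ}.Finite := by
  induction L with
  | nil =>
    refine Set.finite_empty.subset ?_
    rintro ρ ⟨hρ, h_notMem⟩
    exact h_notMem hρ.2
  | cons i L ih =>
    refine (ih.insert ((wordProd hdiag L).symm (Δ i))).subset ?_
    rintro ρ ⟨hρ, h_notMem⟩
    by_cases h_pos : wordProd hdiag L ρ ∈ simpleCone Δ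
    · left
      have h_neg := (signCoherent_wordProd_of_mem_Phi hdiag hB hcoh (i :: L) hρ.1).resolve_left
        h_notMem
      rw [wordProd_cons] at h_neg
      rw [LinearEquiv.eq_symm_apply]
      exact eq_basis_of_neg_simpleReflection_mem_simpleCone hdiag h_pos
        (by rw [apply_wordProd_wordProd hdiag hB, apply_self_eq_one_of_mem_Phi hdiag hB hρ.1]) h_neg
    · exact Or.inr ⟨hρ, h_pos⟩

end Roots

section NormalizedRoots

variable {E I : Type*} [Fintype I] [NormedAddCommGroup E] [NormedSpace ℝ E]
  {B : LinearMap.BilinForm ℝ E} {Δ : Module.Basis I ℝ E}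

lemma continuous_l1 : Continuous (l1 Δ) :=
  have := Module.Finite.of_basis Δ
  continuous_finsetSum _ fun i _ => (Δ.coord i).continuous_of_finiteDimensional

lemma l1_smul (c : ℝ) (v : E) : l1 Δ (c • v) = c * l1 Δ v := by
  simp [l1, Finset.mul_sum]

lemma l1_pos_of_mem_simpleCone {v : E} (hv : v ∈ simpleCone Δ) (hv0 : v ≠ 0) : 0 < l1 Δ v := by
  refine (Finset.sum_nonneg fun i _ => hv i).lt_of_ne fun h => hv0 (Δ.ext_elem fun i => ?_)
  simpa using (Finset.sum_eq_zero_iff_of_nonneg fun i _ => hv i).1 h.symm i (Finset.mem_univ i)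

lemma l1_pos_of_mem_posPhi {ρ : E} (hρ : ρ ∈ posPhi B Δ) : 0 < l1 Δ ρ :=
  l1_pos_of_mem_simpleCone hρ.2 (ne_zero_of_mem_Phi hρ.1)

theorem l1_eq_one_of_mem_Eset {x : E} (hx : x ∈ Eset B Δ) : l1 Δ x = 1 := by
  have h_normalized : nPhi B Δ ⊆ {v | l1 Δ v = 1} := by
    rintro _ ⟨ρ, hρ, rfl⟩
    change l1 Δ ((l1 Δ ρ)⁻¹ • ρ) = 1
    rw [l1_smul, inv_mul_cancel₀ (l1_pos_of_mem_posPhi hρ).ne']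
  exact isClosed_iff_accPt.1 (isClosed_eq continuous_l1 continuous_const) x
    (hx.mono (principal_mono.2 h_normalized))

theorem map_mem_simpleCone_of_mem_Eset (hdiag : ∀ i, B (Δ i) (Δ i) = 1) (hB : B.IsSymm)
    (hcoh : ∀ s t, s ≠ t → IsChebyshevCoherent (-B (Δ s) (Δ t))) {x : E} (hx : x ∈ Eset B Δ)
    {w : E ≃ₗ[ℝ] E} (hw : w ∈ cox B Δ) : w x ∈ simpleCone Δ := by
  have := Module.Finite.of_basis Δ
  obtain ⟨L, rfl⟩ := exists_wordProd_eq_of_mem_cox hdiag hw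
  have h_cont : Continuous (wordProd hdiag L) :=
    (wordProd hdiag L : E →ₗ[ℝ] E).continuous_of_finiteDimensional
  refine mem_of_accPt_of_finite_diff (F := wordProd hdiag L ⁻¹' simpleCone Δ) hx
    ((isClosed_simpleCone Δ).preimage h_cont)
    (((finite_setOf_wordProd_notMem_simpleCone hdiag hB hcoh L).image (nrm Δ)).subset ?_)
  rintro _ ⟨⟨ρ, hρ, rfl⟩, h_notMem⟩
  refine ⟨ρ, ⟨hρ, fun h_pos => h_notMem ?_⟩, rfl⟩
  change wordProd hdiag L ((l1 Δ ρ)⁻¹ • ρ) ∈ simpleCone Δ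
  rw [map_smul]
  exact PointedCone.smul_mem _ (inv_nonneg.2 (l1_pos_of_mem_posPhi hρ).le) h_pos

end NormalizedRoots

/-- For every `x ∈ E(Φ)` and every `w ∈ W`, one has `|w(x)|₁ > 0`; that is, `E(Φ)` is
contained in `D⁺ = V₁ ∩ ⋂_{w ∈ W} w(V₀⁺)` where `V₀⁺ = {v | |v|₁ > 0}`. -/
theorem statement10 (B : LinearMap.BilinForm ℝ V) (Δ : Module.Basis ι ℝ V)
    (hsymm : ∀ u v : V, B u v = B v u)
    (hdiag : ∀ i : ι, B (Δ i) (Δ i) = 1)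
    (hoff : ∀ i j : ι, i ≠ j → B (Δ i) (Δ j) ≤ -1 ∨
      ∃ k : ℕ, 2 ≤ k ∧ B (Δ i) (Δ j) = -Real.cos (Real.pi / (k : ℝ))) :
    ∀ x ∈ Eset B Δ, l1 Δ x = 1 ∧ ∀ w ∈ cox B Δ, 0 < l1 Δ (w x) := by
  intro x hx
  have hcoh (i j : ι) (hij : i ≠ j) : IsChebyshevCoherent (-B (Δ i) (Δ j)) := by
    rcases hoff i j hij with h_le | ⟨k, hk, h_cos⟩
    · exact isChebyshevCoherent_of_one_le (by linarith)
    · rw [h_cos, neg_neg]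
      exact isChebyshevCoherent_cos_pi_div hk
  have h_l1 : l1 Δ x = 1 := l1_eq_one_of_mem_Eset hx
  have hx0 : x ≠ 0 := by
    rintro rfl
    simp [l1] at h_l1
  exact ⟨h_l1, fun w hw => l1_pos_of_mem_simpleCone
    (map_mem_simpleCone_of_mem_Eset hdiag ⟨hsymm⟩ hcoh hx hw) (w.map_ne_zero_iff.2 hx0)⟩
end
end

section
/- Let ρ₁ ≠ ρ₂ be two roots in Φ, let x ∈ L(ρ̂₁, ρ̂₂) ∩ Q, and let w ∈ W. Then w(x) ∉ V₀, and w·x ∈ L(w·ρ̂₁, w·ρ̂₂) ∩ Q, where L(u,v) denotes the affine line through two distinct points u,v of V₁. -/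
open Filter Topology

noncomputable section

variable {ι V : Type*} [Fintype ι] [NormedAddCommGroup V] [NormedSpace ℝ V]

/-- The affine line through two points `a` and `b`. -/
def lineThrough (a b : V) : Set V := { y : V | ∃ t : ℝ, y = a + t • (b - a) }

/-- The `B`-reflection formula: `s_ρ(x) = x - 2 (B ρ x / B ρ ρ) • ρ`. -/
def reflAt (B : LinearMap.BilinForm ℝ V) (ρ x : V) : V := x - (2 * B ρ x / B ρ ρ) • ρ

/-!
Write `x = a ρ₁ + b ρ₂`. As `w x = a (w ρ₁) + b (w ρ₂)` is again a nonzero isotropic combination of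
two roots, the point is that such a vector never has coordinate sum zero. In fact its coordinates
all have the same sign. For roots this is the classical theorem that `w α` is positive when `α` is
not a right descent of `w`. An isotropic `x` with `|a| ≤ |b|` is an eigenvector of `s_ρ₂ s_ρ₁` with
eigenvalue `(b / a)² ≥ 1`, and the lines spanned by the roots `(s_ρ₂ s_ρ₁)ⁿ ρ₂` converge to the line
spanned by `x`; since the vectors with coordinates of one sign form a closed set stable under
scaling, `x` belongs to it.
-/

section ChebyshevReflection

open Polynomial.Chebyshev

theorem chebyshev_S_sub_one_eval_nonneg {x : ℝ} (hx : 2 ≤ x) (n : ℕ) :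
    0 ≤ (S ℝ (n - 1)).eval x := by
  suffices h : 0 ≤ (S ℝ (n - 1)).eval x ∧ (S ℝ (n - 1)).eval x ≤ (S ℝ n).eval x from h.1
  induction n with
  | zero => simp
  | succ n ih =>
    have hrec : (S ℝ (n + 1)).eval x = x * (S ℝ n).eval x - (S ℝ (n - 1)).eval x := by
      simp [S_add_one]
    push_cast
    rw [add_sub_cancel_right, hrec]
    exact ⟨ih.1.trans ih.2, by nlinarith⟩

theorem chebyshev_S_sub_one_eval_two_mul_cos_nonneg {m n : ℕ} (hm : 2 ≤ m) (hn : n ≤ m) :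
    0 ≤ (S ℝ (n - 1)).eval (2 * Real.cos (Real.pi / m)) := by
  have hm' : (2 : ℝ) ≤ m := by exact_mod_cast hm
  have hsin : 0 < Real.sin (Real.pi / m) :=
    Real.sin_pos_of_pos_of_lt_pi (by positivity) (div_lt_self Real.pi_pos (by linarith))
  have hle : n * (Real.pi / m) ≤ Real.pi := by
    rw [mul_div_left_comm]
    exact mul_le_of_le_one_right Real.pi_pos.le (div_le_one_of_le₀ (by exact_mod_cast hn) (by simp))
  have hS := S_two_mul_real_cos (Real.pi / m) (n - 1)
  push_cast at hS
  rw [sub_add_cancel] at hS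
  refine nonneg_of_mul_nonneg_left ?_ hsin
  rw [hS]
  exact Real.sin_nonneg_of_nonneg_of_le_pi (by positivity) hle

theorem reflection_mul_reflection_pow_eq_one {E : Type*} [AddCommGroup E] [Module ℝ E] {x y : E}
    {f g : Module.Dual ℝ E} (hf : f x = 2) (hg : g y = 2) {m : ℕ} (hm : 3 ≤ m)
    (hfg : f y * g x = 4 * Real.cos (Real.pi / m) ^ 2) :
    (Module.reflection hf * Module.reflection hg) ^ m = 1 := by
  set φ : ℝ := 2 * (Real.pi / m) with hφ
  have hm' : (3 : ℝ) ≤ m := by exact_mod_cast hm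
  have hmφ : m * φ = 2 * Real.pi := by rw [hφ]; field_simp
  have hsin : Real.sin φ ≠ 0 := by
    refine (Real.sin_pos_of_pos_of_lt_pi (by positivity) ?_).ne'
    nlinarith [Real.pi_pos]
  have ht : 2 * Real.cos φ = f y * g x - 2 := by rw [hfg, hφ, Real.cos_two_mul]; ring
  have hS (n : ℤ) : (S ℝ n).eval (2 * Real.cos φ) * Real.sin φ = Real.sin ((n + 1) * φ) :=
    S_two_mul_real_cos φ n
  refine LinearEquiv.toLinearMap_injective ?_
  rw [Module.reflection_mul_reflection_pow hf hg m (2 * Real.cos φ) ht]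
  obtain ⟨k, rfl | rfl⟩ := m.even_or_odd'
  · have hk : (S ℝ (k - 1)).eval (2 * Real.cos φ) = 0 := by
      refine (mul_eq_zero.mp ((hS _).trans ?_)).resolve_right hsin
      push_cast at hmφ ⊢
      rw [sub_add_cancel, show (k : ℝ) * φ = Real.pi by linarith, Real.sin_pi]
    rw [show (((2 * k : ℕ) : ℤ) - 2) / 2 = k - 1 by lia,
      show (((2 * k : ℕ) : ℤ) - 1) / 2 = k - 1 by lia, hk]
    simp only [zero_mul, zero_smul, add_zero]
    rfl
  · have hk : (S ℝ k).eval (2 * Real.cos φ) + (S ℝ (k - 1)).eval (2 * Real.cos φ) = 0 := by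
      refine (mul_eq_zero.mp ?_).resolve_right hsin
      rw [add_mul, hS, hS]
      push_cast at hmφ ⊢
      rw [sub_add_cancel, show ((k : ℝ) + 1) * φ = 2 * Real.pi - k * φ by linarith,
        Real.sin_two_pi_sub, neg_add_cancel]
    rw [show (((2 * k + 1 : ℕ) : ℤ) - 2) / 2 = k - 1 by lia,
      show (((2 * k + 1 : ℕ) : ℤ) - 1) / 2 = k by lia,
      show (((2 * k + 1 : ℕ) : ℤ) - 3) / 2 = k - 1 by lia,
      show ((2 * k + 1 : ℕ) : ℤ) / 2 = k by lia, hk]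
    simp only [mul_zero, zero_smul, add_zero]
    rfl

end ChebyshevReflection

section Coxeter

variable {I W : Type*} [Group W] {M : CoxeterMatrix I} (cs : CoxeterSystem M W)

theorem exists_eq_mul_wordProd_alternatingWord {w : W} {s : I} (t : I)
    (hs : ¬cs.IsRightDescent w s) :
    ∃ (v : W) (k : ℕ), w = v * cs.wordProd (CoxeterSystem.alternatingWord s t k) ∧
      cs.length w = cs.length v + k ∧ ¬cs.IsRightDescent v s ∧ ¬cs.IsRightDescent v t := by
  induction hn : cs.length w generalizing w s t with
  | zero =>
    obtain rfl := cs.length_eq_zero_iff.mp hn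
    exact ⟨1, 0, by simp [CoxeterSystem.alternatingWord], by simp,
      cs.not_isRightDescent_one s, cs.not_isRightDescent_one t⟩
  | succ n ih =>
    by_cases ht : cs.IsRightDescent w t
    · have hlen : cs.length (w * cs.simple t) = n := by
        have := cs.isRightDescent_iff.mp ht
        lia
      obtain ⟨v, k, hv, hvlen, hvt, hvs⟩ :=
        ih s (cs.isRightDescent_iff_not_isRightDescent_mul.mp ht) hlen
      refine ⟨v, k + 1, ?_, by lia, hvs, hvt⟩
      rw [CoxeterSystem.alternatingWord_succ, cs.wordProd_concat, ← mul_assoc, ← hv,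
        cs.simple_mul_simple_cancel_right]
    · exact ⟨w, 0, by simp [CoxeterSystem.alternatingWord], by simp [hn], hs, ht⟩

theorem lt_coxeterMatrix_of_not_isRightDescent {v : W} {s t : I} {k : ℕ} (hM : M s t ≠ 0)
    (hlen : cs.length (v * cs.wordProd (CoxeterSystem.alternatingWord s t k)) = cs.length v + k)
    (hs : ¬cs.IsRightDescent (v * cs.wordProd (CoxeterSystem.alternatingWord s t k)) s) :
    k < M s t := by
  by_contra! hk
  rw [M.symmetric] at hM hk
  refine cs.not_isReduced_alternatingWord t s hM (Nat.lt_succ_of_le hk) ?_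
  have hle := cs.length_mul_le v (cs.wordProd (CoxeterSystem.alternatingWord t s (k + 1)))
  have hword := cs.length_wordProd_le (CoxeterSystem.alternatingWord t s (k + 1))
  rw [cs.not_isRightDescent_iff, mul_assoc, ← cs.wordProd_concat,
    ← CoxeterSystem.alternatingWord_succ, hlen] at hs
  rw [CoxeterSystem.length_alternatingWord] at hword
  rw [CoxeterSystem.IsReduced, CoxeterSystem.length_alternatingWord]
  lia

end Coxeter

section RootReflection

variable {E : Type*} [AddCommGroup E] [Module ℝ E] {B : LinearMap.BilinForm ℝ E} {ρ : E}

/-- The `B`-reflection in a vector `ρ`, in the normalization appropriate to `B ρ ρ = 1`. -/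
def unitReflection (B : LinearMap.BilinForm ℝ E) (ρ : E) : Module.End ℝ E :=
  Module.preReflection ρ ((2 : ℝ) • B ρ)

theorem unitReflection_apply (v : E) : unitReflection B ρ v = v - (2 * B ρ v) • ρ := by
  simp [unitReflection, Module.preReflection_apply]

theorem unitReflection_isometry (hB : B.IsSymm) (hρ : B ρ ρ = 1) (u v : E) :
    B (unitReflection B ρ u) (unitReflection B ρ v) = B u v := by
  simp only [unitReflection_apply, map_sub, map_smul, LinearMap.sub_apply, LinearMap.smul_apply,
    smul_eq_mul, hρ, hB.eq u ρ]
  ring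

end RootReflection

/-- `α` is a family of simple roots for the Coxeter matrix `M` with respect to `B`. The first field
includes the normalization `B (α i) (α i) = 1`, because `M i i = 1`; an infinite order is encoded as
`M i j = 0` and leaves `B (α i) (α j)` free in `(-∞, -1]`. -/
structure IsSimpleSystem {I E : Type*} [AddCommGroup E] [Module ℝ E] (B : LinearMap.BilinForm ℝ E)
    (M : CoxeterMatrix I) (α : I → E) : Prop where
  eq_neg_cos : ∀ i j, M i j ≠ 0 → B (α i) (α j) = -Real.cos (Real.pi / M i j)
  le_neg_one : ∀ i j, M i j = 0 → B (α i) (α j) ≤ -1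
  isSymm : B.IsSymm

namespace IsSimpleSystem

variable {I E W : Type*} [AddCommGroup E] [Module ℝ E] [Group W] {B : LinearMap.BilinForm ℝ E}
  {M : CoxeterMatrix I} {α : I → E} (h : IsSimpleSystem B M α)

include h

theorem apply_self (i : I) : B (α i) (α i) = 1 := by
  simpa using h.eq_neg_cos i i (by simp)

theorem chebyshev_S_nonneg {i j : I} (hij : i ≠ j) {n : ℕ} (hn : M i j ≠ 0 → n ≤ M i j) :
    0 ≤ (Polynomial.Chebyshev.S ℝ (n - 1)).eval (-2 * B (α i) (α j)) := by
  by_cases hM : M i j = 0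
  · exact chebyshev_S_sub_one_eval_nonneg (by linarith [h.le_neg_one i j hM]) n
  · have h1 := M.off_diagonal i j hij
    rw [h.eq_neg_cos i j hM, neg_mul_neg]
    exact chebyshev_S_sub_one_eval_two_mul_cos_nonneg (by lia) (hn hM)

/-- The reflection in the simple root `α i`. -/
def simpleReflection (i : I) : E ≃ₗ[ℝ] E :=
  Module.reflection (x := α i) (f := (2 : ℝ) • B (α i)) (by simp [h.apply_self])

theorem simpleReflection_apply (i : I) (v : E) :
    h.simpleReflection i v = unitReflection B (α i) v :=
  rfl

theorem isLiftable : M.IsLiftable h.simpleReflection := by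
  intro i j
  obtain rfl | hij := eq_or_ne i j
  · rw [M.diagonal, pow_one]
    exact mul_eq_one_iff_eq_inv.mpr (Module.reflection_inv _).symm
  obtain hM | hM | hM : M i j = 0 ∨ M i j = 2 ∨ 3 ≤ M i j := by
    have := M.off_diagonal i j hij
    lia
  · rw [hM, pow_zero]
  · have hB : B (α i) (α j) = 0 := by rw [h.eq_neg_cos i j (by lia), hM]; simp
    have hB' : B (α j) (α i) = 0 := by rwa [← h.isSymm.eq]
    ext v
    simp only [hM, pow_two, LinearEquiv.mul_apply, simpleReflection_apply, unitReflection_apply,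
      map_sub, map_smul, h.apply_self, hB, hB', LinearEquiv.coe_one, id]
    module
  · refine reflection_mul_reflection_pow_eq_one _ _ hM ?_
    simp only [LinearMap.smul_apply, smul_eq_mul, h.isSymm.eq (α j) (α i),
      h.eq_neg_cos i j (by lia)]
    ring

variable (cs : CoxeterSystem M W)

/-- The geometric representation of a Coxeter group: simple generators act as the reflections in the
simple roots. -/
def geometricRep : W →* (E ≃ₗ[ℝ] E) :=
  cs.lift ⟨h.simpleReflection, h.isLiftable⟩

theorem geometricRep_simple (i : I) : h.geometricRep cs (cs.simple i) = h.simpleReflection i :=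
  cs.lift_apply_simple h.isLiftable i

theorem range_geometricRep :
    (h.geometricRep cs).range = Subgroup.closure (Set.range h.simpleReflection) := by
  rw [MonoidHom.range_eq_map, ← cs.subgroup_closure_range_simple, MonoidHom.map_closure,
    ← Set.range_comp]
  congr! 2
  exact funext (h.geometricRep_simple cs)

theorem geometricRep_isometry (w : W) (u v : E) :
    B (h.geometricRep cs w u) (h.geometricRep cs w v) = B u v := by
  induction w using cs.simple_induction_left with
  | one => simp
  | mul_simple_left w i ih =>
    rw [map_mul, h.geometricRep_simple, LinearEquiv.mul_apply, LinearEquiv.mul_apply,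
      simpleReflection_apply, simpleReflection_apply,
      unitReflection_isometry h.isSymm (h.apply_self i), ih]

theorem geometricRep_conj_simple (w : W) (i : I) (v : E) :
    h.geometricRep cs (w * cs.simple i * w⁻¹) v =
      unitReflection B (h.geometricRep cs w (α i)) v := by
  have hcancel : h.geometricRep cs w (h.geometricRep cs w⁻¹ v) = v := by
    rw [← LinearEquiv.mul_apply, ← map_mul, mul_inv_cancel, map_one, LinearEquiv.coe_one, id]
  have hform : B (α i) (h.geometricRep cs w⁻¹ v) = B (h.geometricRep cs w (α i)) v := by
    rw [← h.geometricRep_isometry cs w, hcancel]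
  simp only [map_mul, LinearEquiv.mul_apply, h.geometricRep_simple, simpleReflection_apply,
    unitReflection_apply, map_sub, map_smul, hcancel, hform]

open Polynomial.Chebyshev in
theorem geometricRep_alternatingWord_apply (s t : I) (k : ℕ) :
    h.geometricRep cs (cs.wordProd (CoxeterSystem.alternatingWord s t k)) (α s) =
      (S ℝ k).eval (-2 * B (α s) (α t)) • α (if Even k then s else t) +
        (S ℝ (k - 1)).eval (-2 * B (α s) (α t)) • α (if Even k then t else s) := by
  induction k with
  | zero => simp [CoxeterSystem.alternatingWord]
  | succ k ih =>
    rw [CoxeterSystem.alternatingWord_succ', cs.wordProd_cons, map_mul, LinearEquiv.mul_apply, ih,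
      h.geometricRep_simple, simpleReflection_apply, unitReflection_apply]
    push_cast
    rw [add_sub_cancel_right, S_add_one]
    by_cases hk : Even k <;>
    · simp only [hk, Nat.even_add_one, not_true_eq_false, not_false_eq_true, if_true, if_false,
        map_add, map_smul, h.apply_self, h.isSymm.eq (α t) (α s), Polynomial.eval_sub,
        Polynomial.eval_mul, Polynomial.eval_X, smul_eq_mul]
      module

theorem exists_nonneg_geometricRep_alternatingWord_apply {s t : I} (hst : s ≠ t) {k : ℕ}
    (hk : M s t ≠ 0 → k < M s t) :
    ∃ a b : ℝ, 0 ≤ a ∧ 0 ≤ b ∧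
      h.geometricRep cs (cs.wordProd (CoxeterSystem.alternatingWord s t k)) (α s) =
        a • α s + b • α t := by
  have hS := h.chebyshev_S_nonneg hst hk
  have hS' := h.chebyshev_S_nonneg hst fun hM ↦ (hk hM).le
  push_cast at hS
  rw [add_sub_cancel_right] at hS
  rw [h.geometricRep_alternatingWord_apply]
  by_cases hkeven : Even k
  · exact ⟨_, _, hS, hS', by simp only [hkeven, if_true]⟩
  · exact ⟨_, _, hS', hS, by simp only [hkeven, if_false, add_comm]⟩

theorem geometricRep_mem_of_not_isRightDescent {K : PointedCone ℝ E} (hK : ∀ i, α i ∈ K) {w : W}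
    {s : I} (hs : ¬cs.IsRightDescent w s) : h.geometricRep cs w (α s) ∈ K := by
  induction hn : cs.length w using Nat.strong_induction_on generalizing w s with
  | _ n ih =>
    obtain rfl | hw := eq_or_ne w 1
    · simpa using hK s
    obtain ⟨t, ht⟩ := cs.exists_rightDescent_of_ne_one hw
    obtain ⟨v, k, rfl, hlen, hvs, hvt⟩ := exists_eq_mul_wordProd_alternatingWord cs t hs
    have hk : k ≠ 0 := by
      rintro rfl
      exact hvt (by simpa [CoxeterSystem.alternatingWord] using ht)
    obtain ⟨a, b, ha, hb, hab⟩ := h.exists_nonneg_geometricRep_alternatingWord_apply cs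
      (fun hst : s = t ↦ hs (hst ▸ ht))
      (fun hM ↦ lt_coxeterMatrix_of_not_isRightDescent cs hM hlen hs)
    rw [map_mul, LinearEquiv.mul_apply, hab, map_add, map_smul, map_smul]
    exact K.add_mem (K.smul_mem ha (ih _ (by lia) hvs rfl)) (K.smul_mem hb (ih _ (by lia) hvt rfl))

theorem geometricRep_mem_or_neg_mem {K : PointedCone ℝ E} (hK : ∀ i, α i ∈ K) (w : W) (s : I) :
    h.geometricRep cs w (α s) ∈ K ∨ -h.geometricRep cs w (α s) ∈ K := by
  by_cases hs : cs.IsRightDescent w s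
  · right
    convert h.geometricRep_mem_of_not_isRightDescent cs hK
      (cs.isRightDescent_iff_not_isRightDescent_mul.mp hs) using 1
    rw [map_mul, LinearEquiv.mul_apply, h.geometricRep_simple, ← map_neg]
    congr 1
    exact (Module.reflection_apply_self _).symm
  · exact .inl (h.geometricRep_mem_of_not_isRightDescent cs hK hs)

end IsSimpleSystem

theorem exists_coxeterMatrix_isSimpleSystem {I E : Type*} [AddCommGroup E] [Module ℝ E]
    {B : LinearMap.BilinForm ℝ E} (hB : B.IsSymm) {α : I → E} (hdiag : ∀ i, B (α i) (α i) = 1)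
    (hoff : ∀ i j, i ≠ j → B (α i) (α j) ≤ -1 ∨
      ∃ k : ℕ, 2 ≤ k ∧ B (α i) (α j) = -Real.cos (Real.pi / (k : ℝ))) :
    ∃ M : CoxeterMatrix I, IsSimpleSystem B M α := by
  classical
  -- The order is chosen as a function of `B (α i) (α j)` alone, so that `M` is symmetric.
  have horder (c : ℝ) : ∃ m : ℕ, (∃ i j, i ≠ j ∧ B (α i) (α j) = c) →
      m ≠ 1 ∧ (m ≠ 0 → c = -Real.cos (Real.pi / m)) ∧ (m = 0 → c ≤ -1) := by
    by_cases hc : ∃ i j, i ≠ j ∧ B (α i) (α j) = c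
    · obtain ⟨i, j, hij, rfl⟩ := hc
      obtain hle | ⟨k, hk, hcos⟩ := hoff i j hij
      · exact ⟨0, fun _ ↦ ⟨zero_ne_one, fun h ↦ absurd rfl h, fun _ ↦ hle⟩⟩
      · exact ⟨k, fun _ ↦ ⟨by lia, fun _ ↦ hcos, fun h ↦ absurd h (by lia)⟩⟩
    · exact ⟨0, fun h ↦ absurd h hc⟩
  choose m hm using horder
  let M : CoxeterMatrix I :=
    { M := Matrix.of fun i j ↦ if i = j then 1 else m (B (α i) (α j))
      isSymm := by
        ext i j
        simp only [Matrix.transpose_apply, Matrix.of_apply, eq_comm (a := j), hB.eq (α j) (α i)]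
      diagonal := by simp
      off_diagonal := fun i j hij ↦ by simpa [hij] using (hm _ ⟨i, j, hij, rfl⟩).1 }
  have hM (i j : I) (hij : i ≠ j) : M i j = m (B (α i) (α j)) := if_neg hij
  refine ⟨M, fun i j h ↦ ?_, fun i j h ↦ ?_, hB⟩
  · obtain rfl | hij := eq_or_ne i j
    · simp [hdiag]
    · rw [hM i j hij] at h ⊢
      exact (hm _ ⟨i, j, hij, rfl⟩).2.1 h
  · obtain rfl | hij := eq_or_ne i j
    · simp at h
    · rw [hM i j hij] at h
      exact (hm _ ⟨i, j, hij, rfl⟩).2.2 h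

section DoubleCone

variable {E : Type*} [AddCommGroup E] [Module ℝ E]

/-- The double cone `K ∪ -K`; for the cone of vectors with nonnegative coordinates it consists of
the vectors whose coordinates all have the same sign. -/
def doubleCone (K : PointedCone ℝ E) : Set E := {v | v ∈ K ∨ -v ∈ K}

theorem smul_mem_doubleCone {K : PointedCone ℝ E} (r : ℝ) {v : E} (hv : v ∈ doubleCone K) :
    r • v ∈ doubleCone K := by
  obtain hr | hr := le_total 0 r
  · refine hv.imp (K.smul_mem hr) fun hv ↦ ?_
    rw [← smul_neg]
    exact K.smul_mem hr hv
  · refine hv.symm.imp (fun hv ↦ ?_) fun hv ↦ ?_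
    · rw [← neg_smul_neg]
      exact K.smul_mem (neg_nonneg.mpr hr) hv
    · rw [← neg_smul]
      exact K.smul_mem (neg_nonneg.mpr hr) hv

theorem isClosed_doubleCone [TopologicalSpace E] [ContinuousNeg E] {K : PointedCone ℝ E}
    (hK : IsClosed (K : Set E)) : IsClosed (doubleCone K) :=
  hK.union (hK.preimage continuous_neg)

end DoubleCone

section Isotropic

variable {E : Type*} [AddCommGroup E] [Module ℝ E]

theorem exists_pow_smul_iterate_eq {g : Module.End ℝ E} {ρ y : E} {m : ℝ} (hm : 1 ≤ m)
    (hρ : g ρ = m⁻¹ • ρ + y) (hy : g y = m • y) (n : ℕ) :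
    ∃ t : ℝ, n ≤ t ∧ m ^ n • g^[n] ρ = ρ + t • y := by
  have hm0 : m ≠ 0 := by positivity
  induction n with
  | zero => exact ⟨0, by simp, by simp⟩
  | succ n ih =>
    obtain ⟨t, hnt, ht⟩ := ih
    have ht0 : 0 ≤ t := n.cast_nonneg.trans hnt
    refine ⟨m + t * m ^ 2, ?_, ?_⟩
    · push_cast
      linarith [le_mul_of_one_le_right ht0 (one_le_pow₀ hm : 1 ≤ m ^ 2)]
    · rw [Function.iterate_succ_apply', pow_succ', mul_smul, ← map_smul, ht, map_add, map_smul,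
        hρ, hy, smul_add, smul_add, smul_inv_smul₀ hm0]
      module

theorem mem_of_forall_iterate_mem [TopologicalSpace E] [ContinuousAdd E] [ContinuousSMul ℝ E]
    {C : Set E} (hC : IsClosed C) (hsmul : ∀ (r : ℝ) {v : E}, v ∈ C → r • v ∈ C)
    {g : Module.End ℝ E} {ρ y : E} {m : ℝ} (hm : 1 ≤ m) (hρ : g ρ = m⁻¹ • ρ + y)
    (hy : g y = m • y) (hmem : ∀ n, g^[n] ρ ∈ C) : y ∈ C := by
  choose t ht htg using exists_pow_smul_iterate_eq hm hρ hy
  have htop : Tendsto t atTop atTop := tendsto_atTop_mono ht tendsto_natCast_atTop_atTop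
  have hlim : Tendsto (fun n ↦ (t n)⁻¹ • ρ + y) atTop (𝓝 y) := by
    simpa using (htop.inv_tendsto_atTop.smul_const ρ).add_const y
  refine hC.mem_of_tendsto hlim ((htop.eventually_gt_atTop 0).mono fun n hn ↦ ?_)
  have hscale : (t n)⁻¹ • ρ + y = (t n)⁻¹ • m ^ n • g^[n] ρ := by
    rw [htg, smul_add, inv_smul_smul₀ hn.ne']
  rw [hscale]
  exact hsmul _ (hsmul _ (hmem n))

variable {B : LinearMap.BilinForm ℝ E} {ρ₁ ρ₂ : E} {a b : ℝ}

theorem isotropic_smul_add_smul_iff (hB : B.IsSymm) (h₁ : B ρ₁ ρ₁ = 1) (h₂ : B ρ₂ ρ₂ = 1) :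
    B (a • ρ₁ + b • ρ₂) (a • ρ₁ + b • ρ₂) = 0 ↔ a ^ 2 + 2 * a * b * B ρ₁ ρ₂ + b ^ 2 = 0 := by
  simp only [map_add, map_smul, LinearMap.add_apply, LinearMap.smul_apply, smul_eq_mul, h₁, h₂,
    hB.eq ρ₂ ρ₁]
  ring_nf

theorem unitReflection_unitReflection_isotropic (hB : B.IsSymm) (h₁ : B ρ₁ ρ₁ = 1)
    (h₂ : B ρ₂ ρ₂ = 1) (ha : a ≠ 0) (hab : a ^ 2 + 2 * a * b * B ρ₁ ρ₂ + b ^ 2 = 0) :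
    unitReflection B ρ₂ (unitReflection B ρ₁ (a • ρ₁ + b • ρ₂)) =
      (b / a) ^ 2 • (a • ρ₁ + b • ρ₂) := by
  simp only [unitReflection_apply, map_add, map_sub, map_smul, h₁, h₂, hB.eq ρ₂ ρ₁]
  match_scalars <;> field_simp <;> grind

theorem unitReflection_unitReflection_right (hB : B.IsSymm) (h₂ : B ρ₂ ρ₂ = 1) (ha : a ≠ 0)
    (hb : b ≠ 0) (hab : a ^ 2 + 2 * a * b * B ρ₁ ρ₂ + b ^ 2 = 0) :
    unitReflection B ρ₂ (unitReflection B ρ₁ ρ₂) =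
      ((b / a) ^ 2)⁻¹ • ρ₂ + ((a ^ 2 + b ^ 2) / (a ^ 2 * b)) • (a • ρ₁ + b • ρ₂) := by
  have hc : B ρ₁ ρ₂ = -(a ^ 2 + b ^ 2) / (2 * a * b) := by
    field_simp
    linarith
  simp only [unitReflection_apply, map_sub, map_smul, h₂, hB.eq ρ₂ ρ₁, hc]
  match_scalars <;> field_simp
  ring

theorem isotropic_mem_of_mapsTo_unitReflection [TopologicalSpace E] [ContinuousAdd E]
    [ContinuousSMul ℝ E] (hB : B.IsSymm) {C Φ : Set E} (hC : IsClosed C)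
    (hsmul : ∀ (r : ℝ) {v : E}, v ∈ C → r • v ∈ C) (hΦC : Φ ⊆ C) (hunit : ∀ ρ ∈ Φ, B ρ ρ = 1)
    (hmaps : ∀ ρ ∈ Φ, Set.MapsTo (unitReflection B ρ) Φ Φ) (hρ₁ : ρ₁ ∈ Φ) (hρ₂ : ρ₂ ∈ Φ)
    (hx : B (a • ρ₁ + b • ρ₂) (a • ρ₁ + b • ρ₂) = 0) : a • ρ₁ + b • ρ₂ ∈ C := by
  wlog hle : |a| ≤ |b| generalizing a b ρ₁ ρ₂
  · rw [add_comm] at hx ⊢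
    exact this hρ₂ hρ₁ hx (le_of_not_ge hle)
  have h₁ := hunit ρ₁ hρ₁
  have h₂ := hunit ρ₂ hρ₂
  have hab := (isotropic_smul_add_smul_iff hB h₁ h₂).mp hx
  obtain rfl | ha := eq_or_ne a 0
  · obtain rfl : b = 0 := by simpa using hab
    simpa using hsmul 0 (hΦC hρ₁)
  have hb : b ≠ 0 := abs_pos.mp ((abs_pos.mpr ha).trans_le hle)
  have hm : 1 ≤ (b / a) ^ 2 := by
    rw [div_pow, one_le_div (by positivity)]
    exact sq_le_sq.mpr hle
  set κ := (a ^ 2 + b ^ 2) / (a ^ 2 * b)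
  have hκ0 : κ ≠ 0 := by positivity
  suffices hmem : κ • (a • ρ₁ + b • ρ₂) ∈ C by
    simpa only [inv_smul_smul₀ hκ0] using hsmul κ⁻¹ hmem
  refine mem_of_forall_iterate_mem hC hsmul (g := unitReflection B ρ₂ ∘ₗ unitReflection B ρ₁) hm
    (unitReflection_unitReflection_right hB h₂ ha hb hab) ?_ fun n ↦ hΦC ?_
  · rw [map_smul, LinearMap.comp_apply, unitReflection_unitReflection_isotropic hB h₁ h₂ ha hab,
      smul_comm]
  · exact ((hmaps ρ₂ hρ₂).comp (hmaps ρ₁ hρ₁)).iterate n hρ₂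

end Isotropic

/-- The cone of vectors with nonnegative coordinates in the basis `Δ`. -/
def nonnegCone {I E : Type*} [AddCommGroup E] [Module ℝ E] (Δ : Module.Basis I ℝ E) :
    PointedCone ℝ E :=
  ⨅ i, (PointedCone.positive ℝ ℝ).comap (Δ.coord i)

theorem mem_nonnegCone {I E : Type*} [AddCommGroup E] [Module ℝ E] {Δ : Module.Basis I ℝ E}
    {v : E} : v ∈ nonnegCone Δ ↔ ∀ i, 0 ≤ Δ.repr v i := by
  simp [nonnegCone, Submodule.mem_iInf]

theorem basis_mem_nonnegCone {I E : Type*} [AddCommGroup E] [Module ℝ E] (Δ : Module.Basis I ℝ E)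
    (i : I) : Δ i ∈ nonnegCone Δ := by
  classical
  refine mem_nonnegCone.mpr fun j ↦ ?_
  rw [Δ.repr_self, Finsupp.single_apply]
  split_ifs <;> simp

theorem isClosed_nonnegCone {I E : Type*} [Finite I] [AddCommGroup E] [Module ℝ E]
    [TopologicalSpace E] [IsTopologicalAddGroup E] [ContinuousSMul ℝ E] [T2Space E]
    (Δ : Module.Basis I ℝ E) : IsClosed (nonnegCone Δ : Set E) := by
  have := Module.Finite.of_basis Δ
  have hset : (nonnegCone Δ : Set E) = ⋂ i, Δ.coord i ⁻¹' Set.Ici 0 := by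
    ext v
    simp [mem_nonnegCone]
  rw [hset]
  exact isClosed_iInter fun i ↦ isClosed_Ici.preimage (Δ.coord i).continuous_of_finiteDimensional

section Normalization

variable {Δ : Module.Basis ι ℝ V} {u v x : V}

theorem l1_smul_add_smul (Δ : Module.Basis ι ℝ V) (a b : ℝ) (u v : V) :
    l1 Δ (a • u + b • v) = a * l1 Δ u + b * l1 Δ v := by
  simp [l1, Finset.sum_add_distrib, Finset.mul_sum]

theorem l1_ne_zero_of_mem_doubleCone (hv : v ∈ doubleCone (nonnegCone Δ)) (hv0 : v ≠ 0) :
    l1 Δ v ≠ 0 := by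
  have hzero {u : V} (hu : u ∈ nonnegCone Δ) (hsum : l1 Δ u = 0) : u = 0 := by
    have hcoord := (Finset.sum_eq_zero_iff_of_nonneg fun i _ ↦ mem_nonnegCone.mp hu i).mp hsum
    exact Δ.ext_elem fun i ↦ by simpa using hcoord i (Finset.mem_univ i)
  have hneg : l1 Δ (-v) = -l1 Δ v := by simp [l1]
  obtain hv | hv := hv
  · exact fun hsum ↦ hv0 (hzero hv hsum)
  · exact fun hsum ↦ hv0 (neg_eq_zero.mp (hzero hv (by rw [hneg, hsum, neg_zero])))

theorem exists_eq_smul_add_smul_of_mem_lineThrough_nrm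
    (hx : x ∈ lineThrough (nrm Δ u) (nrm Δ v)) : ∃ a b : ℝ, x = a • u + b • v := by
  obtain ⟨t, rfl⟩ := hx
  exact ⟨(1 - t) * (l1 Δ u)⁻¹, t * (l1 Δ v)⁻¹, by unfold nrm; module⟩

theorem l1_eq_one_of_mem_lineThrough_nrm (hu : l1 Δ u ≠ 0) (hv : l1 Δ v ≠ 0)
    (hx : x ∈ lineThrough (nrm Δ u) (nrm Δ v)) : l1 Δ x = 1 := by
  obtain ⟨t, rfl⟩ := hx
  have hcomb : nrm Δ u + t • (nrm Δ v - nrm Δ u) =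
      ((1 - t) * (l1 Δ u)⁻¹) • u + (t * (l1 Δ v)⁻¹) • v := by
    unfold nrm
    module
  rw [hcomb, l1_smul_add_smul]
  field_simp
  ring

theorem nrm_smul_add_smul_mem_lineThrough {a b : ℝ} (hu : l1 Δ u ≠ 0) (hv : l1 Δ v ≠ 0)
    (hab : l1 Δ (a • u + b • v) ≠ 0) :
    nrm Δ (a • u + b • v) ∈ lineThrough (nrm Δ u) (nrm Δ v) := by
  refine ⟨b * l1 Δ v / l1 Δ (a • u + b • v), ?_⟩
  unfold nrm
  rw [l1_smul_add_smul] at hab ⊢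
  match_scalars <;> field_simp
  ring

theorem nrm_mem_isoQ {B : LinearMap.BilinForm ℝ V} (hx : B x x = 0) : nrm Δ x ∈ isoQ B := by
  simp [isoQ, nrm, hx]

end Normalization

theorem map_mem_Phi {I : Type*} {B : LinearMap.BilinForm ℝ V} {Δ : Module.Basis I ℝ V}
    {w : V ≃ₗ[ℝ] V} (hw : w ∈ cox B Δ) {ρ : V} (hρ : ρ ∈ Phi B Δ) : w ρ ∈ Phi B Δ := by
  obtain ⟨v, hv, i, rfl⟩ := hρ
  exact ⟨w * v, mul_mem hw hv, i, rfl⟩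

namespace IsSimpleSystem

variable {I : Type*} {B : LinearMap.BilinForm ℝ V} {Δ : Module.Basis I ℝ V} {M : CoxeterMatrix I}
  (h : IsSimpleSystem B M Δ)

include h

theorem simpleReflections_eq_range : simpleReflections B Δ = Set.range h.simpleReflection := by
  ext e
  refine exists_congr fun i ↦ ?_
  simp only [h.apply_self, div_one, LinearEquiv.ext_iff, simpleReflection_apply,
    unitReflection_apply, eq_comm]

theorem cox_eq_range_geometricRep {W : Type*} [Group W] (cs : CoxeterSystem M W) :
    cox B Δ = (h.geometricRep cs).range := by
  rw [cox, h.simpleReflections_eq_range, h.range_geometricRep]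

theorem cox_isometry {w : V ≃ₗ[ℝ] V} (hw : w ∈ cox B Δ) (u v : V) : B (w u) (w v) = B u v := by
  rw [h.cox_eq_range_geometricRep M.toCoxeterSystem] at hw
  obtain ⟨w, rfl⟩ := hw
  exact h.geometricRep_isometry _ w u v

theorem Phi_apply_self {ρ : V} (hρ : ρ ∈ Phi B Δ) : B ρ ρ = 1 := by
  obtain ⟨w, hw, i, rfl⟩ := hρ
  rw [h.cox_isometry hw, h.apply_self]

theorem mapsTo_unitReflection_Phi {ρ : V} (hρ : ρ ∈ Phi B Δ) :
    Set.MapsTo (unitReflection B ρ) (Phi B Δ) (Phi B Δ) := by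
  obtain ⟨w, hw, i, rfl⟩ := hρ
  have hrange := h.cox_eq_range_geometricRep M.toCoxeterSystem
  obtain ⟨w, rfl⟩ := hrange ▸ hw
  intro σ hσ
  rw [← h.geometricRep_conj_simple]
  exact map_mem_Phi (hrange ▸ ⟨_, rfl⟩) hσ

theorem Phi_subset_doubleCone : Phi B Δ ⊆ doubleCone (nonnegCone Δ) := by
  rintro _ ⟨w, hw, i, rfl⟩
  rw [h.cox_eq_range_geometricRep M.toCoxeterSystem] at hw
  obtain ⟨w, rfl⟩ := hw
  exact h.geometricRep_mem_or_neg_mem _ (basis_mem_nonnegCone Δ) w i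

theorem l1_ne_zero_of_mem_Phi [Fintype I] {ρ : V} (hρ : ρ ∈ Phi B Δ) : l1 Δ ρ ≠ 0 := by
  refine l1_ne_zero_of_mem_doubleCone (h.Phi_subset_doubleCone hρ) ?_
  rintro rfl
  simpa using h.Phi_apply_self hρ

theorem isotropic_mem_doubleCone [Finite I] {ρ₁ ρ₂ : V} (hρ₁ : ρ₁ ∈ Phi B Δ)
    (hρ₂ : ρ₂ ∈ Phi B Δ) {a b : ℝ} (hx : B (a • ρ₁ + b • ρ₂) (a • ρ₁ + b • ρ₂) = 0) :
    a • ρ₁ + b • ρ₂ ∈ doubleCone (nonnegCone Δ) :=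
  isotropic_mem_of_mapsTo_unitReflection h.isSymm (isClosed_doubleCone (isClosed_nonnegCone Δ))
    smul_mem_doubleCone h.Phi_subset_doubleCone (fun _ ↦ h.Phi_apply_self)
    (fun _ ↦ h.mapsTo_unitReflection_Phi) hρ₁ hρ₂ hx

end IsSimpleSystem

/-- Let `ρ₁ ≠ ρ₂` be roots, `x ∈ L(ρ̂₁,ρ̂₂) ∩ Q` and `w ∈ W`.  Then `w(x) ∉ V₀`, and
`w·x ∈ L(w·ρ̂₁, w·ρ̂₂) ∩ Q`. -/
theorem statement12 (B : LinearMap.BilinForm ℝ V) (Δ : Module.Basis ι ℝ V)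
    (hsymm : ∀ u v : V, B u v = B v u)
    (hdiag : ∀ i : ι, B (Δ i) (Δ i) = 1)
    (hoff : ∀ i j : ι, i ≠ j → B (Δ i) (Δ j) ≤ -1 ∨
      ∃ k : ℕ, 2 ≤ k ∧ B (Δ i) (Δ j) = -Real.cos (Real.pi / (k : ℝ)))
    (ρ₁ ρ₂ : V) (h1 : ρ₁ ∈ Phi B Δ) (h2 : ρ₂ ∈ Phi B Δ) (hne : ρ₁ ≠ ρ₂)
    (x : V) (hxL : x ∈ lineThrough (nrm Δ ρ₁) (nrm Δ ρ₂)) (hxQ : B x x = 0)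
    (w : V ≃ₗ[ℝ] V) (hw : w ∈ cox B Δ) :
    l1 Δ (w x) ≠ 0 ∧
    nrm Δ (w x) ∈ lineThrough (nrm Δ (w ρ₁)) (nrm Δ (w ρ₂)) ∩ isoQ B := by
  obtain ⟨M, hM⟩ := exists_coxeterMatrix_isSimpleSystem ⟨hsymm⟩ hdiag hoff
  have hl1 {ρ : V} (hρ : ρ ∈ Phi B Δ) : l1 Δ ρ ≠ 0 := hM.l1_ne_zero_of_mem_Phi hρ
  have hw1 := map_mem_Phi hw h1
  have hw2 := map_mem_Phi hw h2
  have hx0 : x ≠ 0 := by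
    rintro rfl
    simpa [l1] using l1_eq_one_of_mem_lineThrough_nrm (hl1 h1) (hl1 h2) hxL
  obtain ⟨a, b, rfl⟩ := exists_eq_smul_add_smul_of_mem_lineThrough_nrm hxL
  have hwx : w (a • ρ₁ + b • ρ₂) = a • w ρ₁ + b • w ρ₂ := by simp only [map_add, map_smul]
  rw [← w.map_ne_zero_iff, hwx] at hx0
  rw [← hM.cox_isometry hw, hwx] at hxQ
  rw [hwx]
  have hne0 := l1_ne_zero_of_mem_doubleCone (hM.isotropic_mem_doubleCone hw1 hw2 hxQ) hx0
  exact ⟨hne0, nrm_smul_add_smul_mem_lineThrough (hl1 hw1) (hl1 hw2) hne0, nrm_mem_isoQ hxQ⟩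
end
end
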